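/- Let X be a set, let f_k : X → ℝ be a sequence of real-valued functions, and let r ≥ 0 be a real number. If (f_k) is pointwise rough statistically Cauchy on X with roughness degree r, then there exist a function f : X → ℝ and a sequence of functions g_k : X → ℝ such that: (1) for every x ∈ X, the set {k ∈ ℕ : f_k(x) ≠ g_k(x)} has natural density 0, and (2) (g_k) is pointwise rough convergent (in the ordinary sense) to f on X with roughness degree 2r, i.e., for every x ∈ X and every ε > 0 there exists N ∈ ℕ such that |g_k(x) − f(x)| < 2r + ε for all k ≥ N. -/

import Mathlib

open scoped Classical

/-- The set `A ⊆ ℕ` has natural density `d`. -/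
def natDensity (A : Set ℕ) (d : ℝ) : Prop :=
  Filter.Tendsto
    (fun n => (((Finset.range n).filter (fun k => k ∈ A)).card : ℝ) / (n : ℝ))
    Filter.atTop (nhds d)

theorem nd_iff (A : Set ℕ) : natDensity A 0 ↔ ∀ ε > (0 : ℝ), ∃ N : ℕ, ∀ n ≥ N,
    (((Finset.range n).filter (fun k => k ∈ A)).card : ℝ) ≤ ε * n := by
  unfold natDensity
  rw [Metric.tendsto_atTop]
  constructor
  · intro h ε hε
    obtain ⟨N, hN⟩ := h ε hε
    refine ⟨N + 1, fun n hn => ?_⟩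
    have h1 := hN n (by omega)
    have hn0 : (0 : ℝ) < n := by exact_mod_cast (by omega : 0 < n)
    rw [Real.dist_eq, sub_zero, abs_of_nonneg (by positivity), div_lt_iff₀ hn0] at h1
    exact h1.le
  · intro h ε hε
    obtain ⟨N, hN⟩ := h (ε / 2) (by positivity)
    refine ⟨N + 1, fun n hn => ?_⟩
    have h1 := hN n (by omega)
    have hn0 : (0 : ℝ) < n := by exact_mod_cast (by omega : 0 < n)
    rw [Real.dist_eq, sub_zero, abs_of_nonneg (by positivity), div_lt_iff₀ hn0]
    nlinarith

theorem nd_mono {A B : Set ℕ} (h : A ⊆ B) (hB : natDensity B 0) : natDensity A 0 := by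
  rw [nd_iff] at *
  intro ε hε
  obtain ⟨N, hN⟩ := hB ε hε
  refine ⟨N, fun n hn => le_trans ?_ (hN n hn)⟩
  exact_mod_cast Finset.card_le_card (Finset.monotone_filter_right _ (fun k _ hk => h hk))

theorem nd_exists {A B : Set ℕ} (hA : natDensity A 0) (hB : natDensity B 0) :
    ∃ k, k ∉ A ∧ k ∉ B := by
  rw [nd_iff] at *
  obtain ⟨N, hN⟩ := hA (1 / 4) (by norm_num)
  obtain ⟨M, hM⟩ := hB (1 / 4) (by norm_num)
  by_contra! hc
  have h1 := hN (N + M + 1) (by omega)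
  have h2 := hM (N + M + 1) (by omega)
  have h3 : (Finset.range (N + M + 1)) ⊆ ((Finset.range (N + M + 1)).filter (fun k => k ∈ A)) ∪
      ((Finset.range (N + M + 1)).filter (fun k => k ∈ B)) := by
    intro k hk
    rw [Finset.mem_union, Finset.mem_filter, Finset.mem_filter]
    by_cases h : k ∈ A
    · exact Or.inl ⟨hk, h⟩
    · exact Or.inr ⟨hk, hc k h⟩
  have h4 := (Finset.card_le_card h3).trans (Finset.card_union_le _ _)
  rw [Finset.card_range] at h4
  have h5 : ((N + M + 1 : ℕ) : ℝ) ≤ _ := Nat.cast_le.mpr h4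
  have h6 : (0 : ℝ) < ((N + M + 1 : ℕ) : ℝ) := by positivity
  push_cast at h1 h2 h5 h6
  linarith

theorem nd_pideal (A : ℕ → Set ℕ) (hm : Monotone A) (hA : ∀ m, natDensity (A m) 0) :
    ∃ E : Set ℕ, natDensity E 0 ∧ ∀ m, ∃ K, ∀ k ≥ K, k ∈ A m → k ∈ E := by
  let Q : ℕ → ℕ → Prop := fun m k => m ≤ k ∧ k ∈ A m ∧ ∀ n ≥ k,
    (((Finset.range n).filter (fun k => k ∈ A m)).card : ℝ) ≤ 1 / ((m : ℝ) + 1) * n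
  obtain ⟨E, hE⟩ : ∃ E : Set ℕ, ∀ k, k ∈ E ↔ ∃ m, Q m k := ⟨{k | ∃ m, Q m k}, fun k => Iff.rfl⟩
  refine ⟨E, ?_, ?_⟩
  · rw [nd_iff]
    intro ε hε
    obtain ⟨M, hM⟩ := exists_nat_one_div_lt hε
    obtain ⟨N, hN⟩ := (nd_iff _).1 (hA M) ε hε
    refine ⟨N, fun n hn => ?_⟩
    let S := (Finset.range n).filter (fun m => ∃ k < n, Q m k)
    have hS : ∀ k < n, ∀ m, Q m k → m ∈ S := fun k hk m hq =>
      Finset.mem_filter.2 ⟨Finset.mem_range.2 (lt_of_le_of_lt hq.1 hk), k, hk, hq⟩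
    have key : ∀ p, (∀ m ∈ S, m ≤ p) →
        (((Finset.range n).filter (fun k => k ∈ E)).card : ℝ) ≤
        (((Finset.range n).filter (fun k => k ∈ A p)).card : ℝ) := by
      intro p hp
      refine Nat.cast_le.mpr (Finset.card_le_card ?_)
      intro k hk
      obtain ⟨hk1, hk2⟩ := Finset.mem_filter.1 hk
      obtain ⟨m, hq⟩ := (hE k).1 hk2
      exact Finset.mem_filter.2 ⟨hk1, hm (hp m (hS k (Finset.mem_range.1 hk1) m hq)) hq.2.1⟩
    by_cases hc : ∀ m ∈ S, m ≤ M
    · exact (key M hc).trans (hN n hn)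
    · push Not at hc
      obtain ⟨m, hmS, hmM⟩ := hc
      obtain ⟨p, hpS, hp⟩ := S.exists_max_image id ⟨m, hmS⟩
      refine (key p hp).trans ?_
      obtain ⟨-, k, hk, hq⟩ := Finset.mem_filter.1 hpS
      refine (hq.2.2 n hk.le).trans ?_
      have hMp : (M : ℝ) ≤ p := Nat.cast_le.mpr (hmM.le.trans (hp m hmS))
      have : 1 / ((p : ℝ) + 1) ≤ 1 / ((M : ℝ) + 1) := by gcongr
      exact mul_le_mul_of_nonneg_right (this.trans hM.le) (Nat.cast_nonneg n)
  · intro m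
    obtain ⟨N, hN⟩ := (nd_iff _).1 (hA m) (1 / ((m : ℝ) + 1)) (by positivity)
    exact ⟨max m N, fun k hk hkA => (hE k).2 ⟨m, le_trans (le_max_left _ _) hk, hkA, fun n hn =>
      hN n (le_trans (le_trans (le_max_right _ _) hk) hn)⟩⟩

theorem pt (a : ℕ → ℝ) (r : ℝ) (hr : 0 ≤ r)
    (hf : ∀ ε > (0 : ℝ), ∃ N : ℕ, natDensity {k : ℕ | r + ε ≤ |a k - a N|} 0) :
    ∃ (F : ℝ) (g : ℕ → ℝ), natDensity {k : ℕ | a k ≠ g k} 0 ∧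
      (∀ ε > (0 : ℝ), ∃ N : ℕ, ∀ k ≥ N, |g k - F| < 2 * r + ε) := by
  let e : ℕ → ℝ := fun m => 1 / ((m : ℝ) + 1)
  have he : ∀ m, 0 < e m := fun m => by positivity
  choose N hN using fun m => hf (e m) (he m)
  have hpair : ∀ m p, a (N m) - r - e m ≤ a (N p) + r + e p := by
    intro m p
    obtain ⟨k, h1, h2⟩ := nd_exists (hN m) (hN p)
    simp only [Set.mem_ofPred_eq, not_le, abs_lt] at h1 h2
    linarith [h1.1, h1.2, h2.1, h2.2]
  let F := ⨆ m, (a (N m) - r - e m)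
  have hF1 : ∀ m, a (N m) - r - e m ≤ F := fun m =>
    le_ciSup (f := fun m => a (N m) - r - e m) ⟨_, by rintro _ ⟨m, rfl⟩; exact hpair m 0⟩ m
  have hF2 : ∀ p, F ≤ a (N p) + r + e p := fun p => ciSup_le fun m => hpair m p
  obtain ⟨E, hE, hE2⟩ := nd_pideal (fun m => {k | 2 * r + 2 * e m ≤ |a k - F|}) (by
      intro m p hmp k hk
      have : e p ≤ e m := by
        have : (m : ℝ) ≤ p := Nat.cast_le.mpr hmp
        simp only [e]; gcongr
      simp only [Set.mem_ofPred_eq] at *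
      linarith) (by
      intro m
      refine nd_mono ?_ (hN m)
      intro k hk
      simp only [Set.mem_ofPred_eq] at *
      have h1 : |a (N m) - F| ≤ r + e m := by
        rw [abs_le]; constructor <;> linarith [hF1 m, hF2 m]
      linarith [abs_sub_le (a k) (a (N m)) F])
  refine ⟨F, fun k => if k ∈ E then F else a k, nd_mono ?_ hE, ?_⟩
  · intro k hk
    by_contra h
    simp [h] at hk
  · intro ε hε
    obtain ⟨m, hm⟩ := exists_nat_one_div_lt (half_pos hε)
    obtain ⟨K, hK⟩ := hE2 m
    refine ⟨K, fun k hk => ?_⟩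
    by_cases h : k ∈ E
    · simp only [h, if_true, sub_self, abs_zero]; linarith
    · simp only [h, if_false]
      have h1 : ¬ (2 * r + 2 * e m ≤ |a k - F|) := fun h2 => h (hK k hk h2)
      have h2 : e m < ε / 2 := hm
      linarith

theorem stmt_5 {X : Type*} (f : ℕ → X → ℝ) (r : ℝ) (hr : 0 ≤ r)
    (hf : ∀ x : X, ∀ ε > (0 : ℝ),
      ∃ N : ℕ, natDensity {k : ℕ | r + ε ≤ |f k x - f N x|} 0) :
    ∃ (F : X → ℝ) (g : ℕ → X → ℝ),
      (∀ x : X, natDensity {k : ℕ | f k x ≠ g k x} 0) ∧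
      (∀ x : X, ∀ ε > (0 : ℝ), ∃ N : ℕ, ∀ k ≥ N, |g k x - F x| < 2 * r + ε) := by
  choose F g h1 h2 using fun x => pt (fun k => f k x) r hr (hf x)
  exact ⟨F, fun k x => g x k, h1, h2⟩
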